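/- arXiv:2303.17567 — 3 statements merged into one kernel-verified Lean document; each statement's English description precedes it below -/
import Mathlib

section
/- Let p be a prime, n > 1, and let R be a local nearring of order pⁿ whose subgroup L of non-invertible elements is cyclic and non-trivial. Then the additive group R⁺ is either a cyclic group (of order pⁿ) or an elementary abelian group of order p² (i.e. n = 2 and every nonzero element of R⁺ has additive order p, with R⁺ abelian). -/
/-- A left nearring with identity: `(R,+)` is a (not necessarily abelian) group,
`(R,·)` is a monoid, and the left distributive law holds. -/
class NearringWithOne (R : Type*) extends AddGroup R, Monoid R where
  left_distrib : ∀ x y z : R, x * (y + z) = x * y + x * z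

/-!
Left multiplication by a generator `x` of `L` is an additive map from `R` onto `L`, so
`|R| = |K| |L|`, where `K` is the annihilator of `x`. Since `1 ∉ L`, one of `m • 1` and
`(1 - m) • 1` is a unit for every integer `m`; and if `m • 1` is a unit, then `m • r = 0` forces
`r = 0`. With `0 * x = e • x`, idempotence of `0` and this dichotomy for `e` give `0 * R = 0` or
`0 * y = y` on `L`. In the first case `K ≤ L`, in the second `0 * ·` embeds `K` into `L`; either way
`|K| ≤ |L|`.

If `0 * R = 0`, write `x = c • x + a • 1` with `c • x ∈ K`. The dichotomy for `c` gives `x * x = 0`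
or `x ∈ ⟨a • 1⟩`, and in the latter case `R⁺ = ⟨1⟩`. So if `R⁺` is not cyclic, then either
`x * x = 0` or `0` acts as the identity on `L`. In both cases `p • x = x * (p • 1) = 0` for the
prime `p` with `p • 1 ∈ L`; hence `|L| = p` and `|R| = p²`.
-/

theorem add_comm_and_addOrderOf_eq_of_card_eq_prime_sq {G : Type*} [AddGroup G] {p : ℕ}
    (hp : p.Prime) (hcard : Nat.card G = p ^ 2) (hG : ¬ IsAddCyclic G) :
    (∀ x y : G, x + y = y + x) ∧ ∀ x : G, x ≠ 0 → addOrderOf x = p := by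
  have : Fact p.Prime := ⟨hp⟩
  have hcomm : IsMulCommutative (Multiplicative G) :=
    IsPGroup.isMulCommutative_of_card_eq_prime_sq (p := p) hcard
  have hexp : AddMonoid.exponent G = p := (not_isAddCyclic_iff_exponent_eq_prime hp hcard).mp hG
  refine ⟨fun x y ↦ hcomm.is_comm.comm (Multiplicative.ofAdd x) (Multiplicative.ofAdd y),
    fun x hx ↦ addOrderOf_eq_prime ?_ hx⟩
  rw [← hexp, AddMonoid.exponent_nsmul_eq_zero]

namespace NearringWithOne

open AddSubgroup

variable {R : Type*} [NearringWithOne R]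

/-- Left multiplication by `r`, as an endomorphism of the additive group of a left nearring. Right
multiplication is not additive in general, and `0 * r` need not vanish. -/
def mulLeft (r : R) : R →+ R := AddMonoidHom.mk' (r * ·) (left_distrib r)

@[simp]
theorem mulLeft_apply (r s : R) : mulLeft r s = r * s := rfl

protected theorem mul_zero (r : R) : r * 0 = 0 := map_zero (mulLeft r)

protected theorem mul_sub (r s t : R) : r * (s - t) = r * s - r * t := map_sub (mulLeft r) s t

protected theorem mul_zsmul (r : R) (m : ℤ) (s : R) : r * (m • s) = m • (r * s) :=
  map_zsmul (mulLeft r) m s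

theorem mul_zsmul_one (r : R) (m : ℤ) : r * (m • (1 : R)) = m • r := by
  rw [NearringWithOne.mul_zsmul, mul_one]

theorem zero_mul_zero_mul (r : R) : 0 * (0 * r) = 0 * r := by
  rw [← mul_assoc, NearringWithOne.mul_zero]

theorem eq_zero_of_zsmul_eq_zero {m : ℤ} (hm : IsUnit (m • (1 : R))) {r : R} (hr : m • r = 0) :
    r = 0 :=
  hm.mul_right_cancel (by rw [mul_zsmul_one, mul_zsmul_one, hr, zsmul_zero])

theorem not_isUnit_zsmul_one_of_prime_dvd_card [Finite R] {p : ℕ} (hp : p.Prime)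
    (hdvd : p ∣ Nat.card R) : ¬ IsUnit ((p : ℤ) • (1 : R)) := by
  have : Fact p.Prime := ⟨hp⟩
  intro hu
  obtain ⟨r, hr⟩ := exists_prime_addOrderOf_dvd_card' p hdvd
  have hr0 : r = 0 :=
    eq_zero_of_zsmul_eq_zero hu (by rw [natCast_zsmul, ← hr, addOrderOf_nsmul_eq_zero])
  exact hp.one_lt.ne (by rw [← hr, hr0, addOrderOf_zero])

section Local

variable {L : AddSubgroup R} (hL : ∀ r : R, r ∈ L ↔ ¬ IsUnit r)
include hL

theorem one_notMem : (1 : R) ∉ L := fun h ↦ (hL 1).mp h isUnit_one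

theorem isUnit_or_isUnit_of_add_eq_one {r s : R} (h : r + s = 1) : IsUnit r ∨ IsUnit s := by
  by_contra! hrs
  exact one_notMem hL (h ▸ L.add_mem ((hL r).mpr hrs.1) ((hL s).mpr hrs.2))

theorem isUnit_zsmul_one_or (m : ℤ) : IsUnit (m • (1 : R)) ∨ IsUnit ((1 - m) • (1 : R)) :=
  isUnit_or_isUnit_of_add_eq_one hL (by rw [← add_zsmul, add_sub_cancel, one_zsmul])

theorem zero_mul_ne_one (r : R) : 0 * r ≠ 1 := by
  intro h
  have h10 : (1 : R) = 0 := by rw [← h, ← zero_mul_zero_mul, h, mul_one]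
  exact one_notMem hL (h10 ▸ L.zero_mem)

theorem isUnit_of_mul_eq_one {r s : R} (h : r * s = 1) : IsUnit r := by
  rcases isUnit_or_isUnit_of_add_eq_one hL (sub_add_cancel 1 (s * r)) with hu | hu
  · -- `1 - s * r` is annihilated by `r`, which forces `r` into `0 * R`.
    obtain ⟨v, hv⟩ := hu.exists_right_inv
    have hr : r = 0 * v := by
      rw [← mul_one r, ← hv, ← mul_assoc, NearringWithOne.mul_sub, ← mul_assoc, h, one_mul, mul_one,
        sub_self]
    exact absurd (by rw [← mul_assoc, ← hr, h]) (zero_mul_ne_one hL (v * s))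
  · obtain ⟨v, hv⟩ := hu.exists_left_inv
    rw [← mul_assoc] at hv
    exact isUnit_iff_exists.mpr ⟨s, h, left_inv_eq_right_inv hv h ▸ hv⟩

theorem mul_mem {r : R} (hr : r ∈ L) (s : R) : r * s ∈ L := by
  rw [hL] at hr ⊢
  intro hrs
  obtain ⟨v, hv⟩ := hrs.exists_right_inv
  exact hr (isUnit_of_mul_eq_one hL (by rw [← mul_assoc, hv]))

theorem ker_mulLeft_inf_ker_mulLeft_zero_le {r : R} (hr : r ≠ 0) :
    (mulLeft r).ker ⊓ (mulLeft 0).ker ≤ L := fun s hs ↦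
  (hL s).mpr fun hu ↦ hr (hu.mul_right_cancel (hs.1.trans hs.2.symm))

theorem exists_prime_card_eq_pow [Finite R] : ∃ p n, p.Prime ∧ n ≠ 0 ∧ Nat.card R = p ^ n := by
  have : Nontrivial R := ⟨1, 0, fun h ↦ one_notMem hL (h ▸ L.zero_mem)⟩
  obtain ⟨p, hp, hpdvd⟩ := Nat.exists_prime_and_dvd (Finite.one_lt_card (α := R)).ne'
  have huniq {q : ℕ} (hq : q.Prime) (hqdvd : q ∣ Nat.card R) : q = p := by
    by_contra hne
    obtain ⟨u, v, huv⟩ := Nat.isCoprime_iff_coprime.mpr ((Nat.coprime_primes hq hp).mpr hne)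
    apply one_notMem hL
    rw [← one_zsmul (1 : R), ← huv, add_zsmul, mul_zsmul, mul_zsmul]
    exact L.add_mem
      (L.zsmul_mem ((hL _).mpr (not_isUnit_zsmul_one_of_prime_dvd_card hq hqdvd)) u)
      (L.zsmul_mem ((hL _).mpr (not_isUnit_zsmul_one_of_prime_dvd_card hp hpdvd)) v)
  have hpow := Nat.eq_prime_pow_of_unique_prime_dvd Nat.card_pos.ne' huniq
  refine ⟨p, _, hp, fun hn ↦ ?_, hpow⟩
  rw [hn, pow_zero] at hpow
  exact Finite.one_lt_card.ne' hpow

end Local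

section CyclicNonunits

variable {x : R} (hx : ∀ r : R, r ∈ zmultiples x ↔ ¬ IsUnit r)
include hx

theorem range_mulLeft_eq_zmultiples : (mulLeft x).range = zmultiples x := by
  apply le_antisymm
  · rintro _ ⟨r, rfl⟩
    exact mul_mem hx (mem_zmultiples x) r
  · rw [zmultiples_le]
    exact ⟨1, mul_one x⟩

theorem mem_zmultiples_zsmul_of_isUnit {m : ℤ} (hm : IsUnit (m • (1 : R))) :
    x ∈ zmultiples (m • x) := by
  obtain ⟨v, hv⟩ := hm.exists_left_inv
  obtain ⟨b, hb⟩ := mem_zmultiples_iff.mp (mul_mem hx (mem_zmultiples x) v)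
  refine mem_zmultiples_iff.mpr ⟨b, ?_⟩
  calc b • m • x = m • (x * v) := by rw [zsmul_comm, hb]
    _ = x * (v * m • 1) := by rw [← mul_assoc, mul_zsmul_one]
    _ = x := by rw [hv, mul_one]

theorem finite_nonunits : Finite (zmultiples x) := by
  rw [← SetLike.coe_sort_coe, Set.finite_coe_iff, finite_zmultiples, ← addOrderOf_ne_zero_iff]
  intro h
  -- A generator of infinite order lies in `⟨m • x⟩` only for `m = ±1`, but here `m` is `3` or `-2`.
  rcases isUnit_zsmul_one_or hx 3 with hm | hm <;>
    simpa [mem_zmultiples_zsmul_iff, h] using mem_zmultiples_zsmul_of_isUnit hx hm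

theorem zero_mul_eq_zero_or_zero_mul_eq_self :
    (∀ r : R, 0 * r = 0) ∨ ∀ y ∈ zmultiples x, 0 * y = y := by
  have hmem (r : R) : 0 * r ∈ zmultiples x := mul_mem hx (zero_mem _) r
  obtain ⟨e, he⟩ := mem_zmultiples_iff.mp (hmem x)
  have hidem : (1 - e) • (0 * x) = 0 := by
    rw [sub_zsmul, one_zsmul, ← NearringWithOne.mul_zsmul, he, zero_mul_zero_mul,
      add_neg_cancel]
  rcases isUnit_zsmul_one_or hx e with hu | hu
  · right
    have hfix : 0 * x = x := by
      have : (1 - e) • x = 0 := eq_zero_of_zsmul_eq_zero hu (by rw [zsmul_comm, he, hidem])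
      rwa [sub_zsmul, one_zsmul, he, add_neg_eq_zero, eq_comm] at this
    intro y hy
    obtain ⟨b, rfl⟩ := mem_zmultiples_iff.mp hy
    rw [NearringWithOne.mul_zsmul, hfix]
  · left
    have h0x : 0 * x = 0 := eq_zero_of_zsmul_eq_zero hu hidem
    intro r
    obtain ⟨b, hb⟩ := mem_zmultiples_iff.mp (hmem r)
    rw [← zero_mul_zero_mul, ← hb, NearringWithOne.mul_zsmul, h0x, zsmul_zero]

theorem exists_injective_ker_mulLeft (hx0 : x ≠ 0) :
    ∃ f : (mulLeft x).ker → zmultiples x, Function.Injective f := by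
  have hker := ker_mulLeft_inf_ker_mulLeft_zero_le hx hx0
  rcases zero_mul_eq_zero_or_zero_mul_eq_self hx with h0 | hfix
  · exact ⟨inclusion fun r hr ↦ hker ⟨hr, h0 r⟩, inclusion_injective _⟩
  · refine ⟨fun k ↦ ⟨0 * k, mul_mem hx (zero_mem _) _⟩, fun k k' hkk' ↦ ?_⟩
    have heq : 0 * (k : R) = 0 * k' := Subtype.ext_iff.mp hkk'
    have h0 : 0 * (k - k' : R) = 0 := by rw [NearringWithOne.mul_sub, heq, sub_self]
    have hmem : (k - k' : R) ∈ zmultiples x := hker ⟨(mulLeft x).ker.sub_mem k.2 k'.2, h0⟩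
    exact Subtype.ext (sub_eq_zero.mp ((hfix _ hmem).symm.trans h0))

theorem finite_of_nonunits_eq_zmultiples (hx0 : x ≠ 0) : Finite R := by
  have := finite_nonunits hx
  obtain ⟨f, hf⟩ := exists_injective_ker_mulLeft hx hx0
  rw [(mulLeft x).finite_iff_finite_ker_range, range_mulLeft_eq_zmultiples hx]
  exact ⟨Finite.of_injective f hf, this⟩

theorem card_le_card_nonunits_sq (hx0 : x ≠ 0) :
    Nat.card R ≤ Nat.card (zmultiples x) ^ 2 := by
  have := finite_nonunits hx
  obtain ⟨f, hf⟩ := exists_injective_ker_mulLeft hx hx0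
  rw [← (mulLeft x).ker.card_mul_index, index_ker, range_mulLeft_eq_zmultiples hx, sq]
  exact Nat.mul_le_mul_right _ (Nat.card_le_card_of_injective f hf)

theorem exists_eq_zsmul_add_zsmul_one (hx0 : x ≠ 0) (h0 : ∀ r : R, 0 * r = 0) (r : R) :
    ∃ c a : ℤ, x * (c • x) = 0 ∧ r = c • x + a • 1 := by
  obtain ⟨a, ha⟩ := mem_zmultiples_iff.mp (mul_mem hx (mem_zmultiples x) r)
  have hk : x * (r - a • 1) = 0 := by
    rw [NearringWithOne.mul_sub, mul_zsmul_one, ha, sub_self]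
  obtain ⟨c, hc⟩ := mem_zmultiples_iff.mp
    (ker_mulLeft_inf_ker_mulLeft_zero_le hx hx0 ⟨hk, h0 _⟩)
  exact ⟨c, a, by rw [hc, hk], by rw [hc, sub_add_cancel]⟩

theorem isAddCyclic_or_mul_self_eq_zero (hx0 : x ≠ 0) (h0 : ∀ r : R, 0 * r = 0) :
    IsAddCyclic R ∨ x * x = 0 := by
  obtain ⟨c, a, hc, hxca⟩ := exists_eq_zsmul_add_zsmul_one hx hx0 h0 x
  rcases isUnit_zsmul_one_or hx c with hu | hu
  · right
    exact eq_zero_of_zsmul_eq_zero hu (by rw [← NearringWithOne.mul_zsmul, hc])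
  · left
    have hsub : (1 - c) • x = a • 1 := by
      rw [sub_eq_neg_add, add_zsmul, one_zsmul, neg_zsmul, neg_add_eq_iff_eq_add, ← hxca]
    have hx1 : x ∈ zmultiples (1 : R) :=
      zmultiples_le.mpr (hsub ▸ zsmul_mem (mem_zmultiples 1) a)
        (mem_zmultiples_zsmul_of_isUnit hx hu)
    refine ⟨1, fun r ↦ ?_⟩
    obtain ⟨d, b, -, rfl⟩ := exists_eq_zsmul_add_zsmul_one hx hx0 h0 r
    exact add_mem (zsmul_mem hx1 d) (zsmul_mem (mem_zmultiples 1) b)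

theorem isAddCyclic_or_zsmul_eq_zero (hx0 : x ≠ 0) {m : ℤ} (hm : ¬ IsUnit (m • (1 : R))) :
    IsAddCyclic R ∨ m • x = 0 := by
  have hmem : m • (1 : R) ∈ zmultiples x := (hx _).mpr hm
  rcases zero_mul_eq_zero_or_zero_mul_eq_self hx with h0 | hfix
  · refine (isAddCyclic_or_mul_self_eq_zero hx hx0 h0).imp_right fun hxx ↦ ?_
    obtain ⟨b, hb⟩ := mem_zmultiples_iff.mp hmem
    rw [← mul_zsmul_one, ← hb, NearringWithOne.mul_zsmul, hxx, zsmul_zero]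
  · right
    have hm0 : m • (1 : R) = 0 := by rw [← hfix _ hmem, mul_zsmul_one, zsmul_zero]
    rw [← mul_zsmul_one, hm0, NearringWithOne.mul_zero]

theorem eq_two_of_card_eq_pow_of_zsmul_eq_zero {p n : ℕ} (hp : p.Prime)
    (hcard : Nat.card R = p ^ n) (hx0 : x ≠ 0) (hpx : (p : ℤ) • x = 0) : n = 2 := by
  have : Fact p.Prime := ⟨hp⟩
  have : Finite R := finite_of_nonunits_eq_zmultiples hx hx0
  have hcardL : Nat.card (zmultiples x) = p := by
    rw [Nat.card_zmultiples, addOrderOf_eq_prime (by rwa [← natCast_zsmul]) hx0]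
  have hne : zmultiples x ≠ ⊤ := fun h ↦ one_notMem hx (h ▸ mem_top 1)
  have hlt : p ^ 1 < p ^ n := by
    rw [pow_one, ← hcard, ← hcardL]
    exact lt_of_le_of_ne (card_le_card_addGroup _) fun h ↦ hne (eq_top_of_card_eq _ h)
  have hle : p ^ n ≤ p ^ 2 := by
    simpa only [hcard, hcardL] using card_le_card_nonunits_sq hx hx0
  have h1 := (Nat.pow_lt_pow_iff_right hp.one_lt).mp hlt
  have h2 := (Nat.pow_le_pow_iff_right hp.one_lt).mp hle
  lia

end CyclicNonunits

end NearringWithOne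

open AddSubgroup NearringWithOne in
theorem addGroup_cyclic_or_elementary_abelian_general (R : Type*) [NearringWithOne R]
    (L : AddSubgroup R) (hL : ∀ r : R, r ∈ L ↔ ¬ IsUnit r) (hLcyc : IsAddCyclic L)
    (hLne : L ≠ ⊥) :
    ∃ p n, p.Prime ∧ n ≠ 0 ∧ Nat.card R = p ^ n ∧ (IsAddCyclic R ∨
      (n = 2 ∧ (∀ x y : R, x + y = y + x) ∧ ∀ x : R, x ≠ 0 → addOrderOf x = p)) := by
  obtain ⟨x, rfl⟩ := L.isAddCyclic_iff_exists_zmultiples_eq_top.mp hLcyc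
  have hx0 : x ≠ 0 := zmultiples_ne_bot.mp hLne
  have : Finite R := finite_of_nonunits_eq_zmultiples hL hx0
  obtain ⟨p, n, hp, hn, hcard⟩ := exists_prime_card_eq_pow hL
  refine ⟨p, n, hp, hn, hcard, ?_⟩
  by_cases hR : IsAddCyclic R
  · exact Or.inl hR
  have hpx : (p : ℤ) • x = 0 := (isAddCyclic_or_zsmul_eq_zero hL hx0
    (not_isUnit_zsmul_one_of_prime_dvd_card hp (hcard ▸ dvd_pow_self p hn))).resolve_left hR
  obtain rfl : n = 2 := eq_two_of_card_eq_pow_of_zsmul_eq_zero hL hp hcard hx0 hpx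
  exact Or.inr ⟨rfl, add_comm_and_addOrderOf_eq_of_card_eq_prime_sq hp hcard hR⟩

/-- A local nearring of order `p^n` (`n > 1`) whose subgroup of non-invertible
elements is cyclic and non-trivial has additive group that is either cyclic or
elementary abelian of order `p²`. -/
theorem addGroup_cyclic_or_elementary_abelian (p n : ℕ) (hp : p.Prime) (hn : 1 < n)
    (R : Type*) [NearringWithOne R] [Fintype R] (hcard : Fintype.card R = p ^ n)
    (L : AddSubgroup R) (hL : ∀ x : R, x ∈ L ↔ ¬ IsUnit x)
    (hLcyc : IsAddCyclic L) (hLne : L ≠ ⊥) :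
    IsAddCyclic R ∨
      (n = 2 ∧ (∀ x y : R, x + y = y + x) ∧ ∀ x : R, x ≠ 0 → addOrderOf x = p) := by
  obtain ⟨q, m, hq, hm, hqm, h⟩ :=
    addGroup_cyclic_or_elementary_abelian_general R L hL hLcyc hLne
  rw [← Nat.card_eq_fintype_card, hqm] at hcard
  obtain ⟨rfl, rfl⟩ := hq.pow_inj' hp hm (by lia) hcard
  exact h
end

section
/- For each odd prime p there exists a local nearring R of order p⁴ together with elements a, b of R which, together with c := −a − b + a + b, generate the additive group R⁺ and satisfy p²•a = 0, p•a ≠ 0, p•b = 0, p•c = 0, a + c = c + a, b + c = c + b and c ≠ 0. (These conditions say exactly that R⁺ is isomorphic to the group G₁ = (C_{p²} × C_p) ⋊ C_p of order p⁴ and nilpotency class 2, the non-metacyclic Miller–Moreno group with commutator subgroup of order p.) -/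
/-!
If the additive group of a nearring with identity has nilpotency class 2 and is generated by `a = 1`
and `b`, then left multiplication by `s` is an additive endomorphism sending `a` to `s`, hence it
is determined by the image of `b`. Letting it send `b` to `x • b`, where `x` is the `a`-coordinate
of `s`, forces the commutator `c` to go to `x ^ 2 • c`. These endomorphisms are closed under
composition, which gives associativity, and `s` is a unit exactly when `x` is; so the nearring is
local as soon as the coefficients of `a` form a local ring, here `ZMod (p ^ 2)`.
-/

lemma isLocalRing_zmod_pow (p : ℕ) [Fact p.Prime] {n : ℕ} (hn : n ≠ 0) :
    IsLocalRing (ZMod (p ^ n)) :=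
  have : Fact (1 < p ^ n) := ⟨Nat.one_lt_pow hn (Fact.out : p.Prime).one_lt⟩
  .of_surjective' (PadicInt.toZModPow n) (ZMod.ringHom_surjective _)

lemma zmod_zmultiples_eq_top_of_isUnit {n : ℕ} {u : ZMod n} (hu : IsUnit u) :
    AddSubgroup.zmultiples u = ⊤ := by
  refine (AddSubgroup.eq_top_iff' _).2 fun t ↦ ?_
  obtain ⟨v, hv⟩ := hu.exists_left_inv
  obtain ⟨k, hk⟩ := ZMod.intCast_surjective (t * v)
  exact ⟨k, by simp only [zsmul_eq_mul, hk, mul_assoc, hv, mul_one]⟩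

/-- The Heisenberg nearring of a module `M` over a commutative ring `A`: its additive group is the
extension of `A × M` (coordinates `x`, `y`) by the central subgroup `M` (coordinate `z`) with
cocycle `x • y' - x' • y`. The alternating cocycle, rather than `x • y'`, makes multiples
coordinatewise but puts a factor `2` into commutators. -/
@[ext]
structure HeisenbergNearring (A M : Type*) where
  x : A
  y : M
  z : M

namespace HeisenbergNearring

variable {A M : Type*}

/-- The coordinates of an element of the Heisenberg nearring, used to count its elements. -/
def equivProd : HeisenbergNearring A M ≃ A × M × M where
  toFun s := (s.x, s.y, s.z)
  invFun t := ⟨t.1, t.2.1, t.2.2⟩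

instance [Fintype A] [Fintype M] : Fintype (HeisenbergNearring A M) :=
  Fintype.ofEquiv _ equivProd.symm

lemma card_eq [Fintype A] [Fintype M] :
    Fintype.card (HeisenbergNearring A M) = Fintype.card A * Fintype.card M ^ 2 := by
  rw [Fintype.card_congr equivProd, Fintype.card_prod, Fintype.card_prod, sq]

variable [CommRing A] [AddCommGroup M]

instance : Zero (HeisenbergNearring A M) := ⟨⟨0, 0, 0⟩⟩
instance : One (HeisenbergNearring A M) := ⟨⟨1, 0, 0⟩⟩
instance : Neg (HeisenbergNearring A M) := ⟨fun s ↦ ⟨-s.x, -s.y, -s.z⟩⟩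

section Coordinates

variable (s : HeisenbergNearring A M)

@[simp] lemma zero_x : (0 : HeisenbergNearring A M).x = 0 := rfl
@[simp] lemma zero_y : (0 : HeisenbergNearring A M).y = 0 := rfl
@[simp] lemma zero_z : (0 : HeisenbergNearring A M).z = 0 := rfl
@[simp] lemma one_x : (1 : HeisenbergNearring A M).x = 1 := rfl
@[simp] lemma one_y : (1 : HeisenbergNearring A M).y = 0 := rfl
@[simp] lemma one_z : (1 : HeisenbergNearring A M).z = 0 := rfl
@[simp] lemma neg_x : (-s).x = -s.x := rfl
@[simp] lemma neg_y : (-s).y = -s.y := rfl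
@[simp] lemma neg_z : (-s).z = -s.z := rfl

end Coordinates

variable [Module A M]

instance : Add (HeisenbergNearring A M) :=
  ⟨fun s t ↦ ⟨s.x + t.x, s.y + t.y, s.z + t.z + (s.x • t.y - t.x • s.y)⟩⟩
instance : Mul (HeisenbergNearring A M) :=
  ⟨fun s t ↦ ⟨s.x * t.x, t.x • s.y + s.x • t.y, t.x • s.z + s.x ^ 2 • t.z⟩⟩

section Coordinates

variable (s t : HeisenbergNearring A M)

@[simp] lemma add_x : (s + t).x = s.x + t.x := rfl
@[simp] lemma add_y : (s + t).y = s.y + t.y := rfl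
@[simp] lemma add_z : (s + t).z = s.z + t.z + (s.x • t.y - t.x • s.y) := rfl
@[simp] lemma mul_x : (s * t).x = s.x * t.x := rfl
@[simp] lemma mul_y : (s * t).y = t.x • s.y + s.x • t.y := rfl
@[simp] lemma mul_z : (s * t).z = t.x • s.z + s.x ^ 2 • t.z := rfl

end Coordinates

instance : AddGroup (HeisenbergNearring A M) := AddGroup.ofLeftAxioms
  (fun s t u ↦ by
    ext
    · exact add_assoc ..
    · exact add_assoc ..
    · simp only [add_x, add_y, add_z]; module)
  (fun s ↦ by ext <;> simp)
  (fun s ↦ by ext <;> simp)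

instance : Monoid (HeisenbergNearring A M) where
  mul_assoc s t u := by
    ext
    · exact mul_assoc ..
    · simp only [mul_x, mul_y]; module
    · simp only [mul_x, mul_z]; module
  one_mul s := by ext <;> simp
  mul_one s := by ext <;> simp

instance : NearringWithOne (HeisenbergNearring A M) where
  left_distrib s t u := by
    ext
    · exact mul_add ..
    · simp only [add_x, add_y, mul_y]; module
    · simp only [add_x, add_z, mul_x, mul_y, mul_z]; module

lemma nsmul_eq (n : ℕ) (s : HeisenbergNearring A M) : n • s = ⟨n • s.x, n • s.y, n • s.z⟩ := by
  induction n with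
  | zero => ext <;> simp
  | succ n ih =>
    rw [succ_nsmul, ih]
    ext
    · exact (succ_nsmul ..).symm
    · exact (succ_nsmul ..).symm
    · simp only [add_z]; module

lemma zsmul_eq (n : ℤ) (s : HeisenbergNearring A M) : n • s = ⟨n • s.x, n • s.y, n • s.z⟩ := by
  cases n with
  | ofNat n => simp only [Int.ofNat_eq_natCast, natCast_zsmul, nsmul_eq]
  | negSucc n => simp only [negSucc_zsmul, nsmul_eq]; rfl

lemma neg_sub_add_add (s t : HeisenbergNearring A M) :
    -s - t + s + t = ⟨0, 0, (2 : ℕ) • (s.x • t.y - t.x • s.y)⟩ := by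
  rw [sub_eq_add_neg]
  ext
  · simp
  · simp
  · simp only [add_x, add_y, add_z, neg_x, neg_y, neg_z]; module

lemma addCommute_mk_zero_zero (s : HeisenbergNearring A M) (w : M) : AddCommute s ⟨0, 0, w⟩ := by
  ext <;> simp [add_comm]

lemma eq_add_add (s : HeisenbergNearring A M) :
    s = ⟨s.x, 0, 0⟩ + ⟨0, s.y, 0⟩ + ⟨0, 0, s.z - s.x • s.y⟩ := by
  ext <;> simp

lemma closure_triple_eq_top {u : A} {v w : M} (hu : AddSubgroup.zmultiples u = ⊤)
    (hv : AddSubgroup.zmultiples v = ⊤) (hw : AddSubgroup.zmultiples w = ⊤) :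
    AddSubgroup.closure {(⟨u, 0, 0⟩ : HeisenbergNearring A M), ⟨0, v, 0⟩, ⟨0, 0, w⟩} = ⊤ := by
  refine (AddSubgroup.eq_top_iff' _).2 fun s ↦ ?_
  obtain ⟨k, hk⟩ := AddSubgroup.mem_zmultiples_iff.1 (hu ▸ AddSubgroup.mem_top s.x)
  obtain ⟨l, hl⟩ := AddSubgroup.mem_zmultiples_iff.1 (hv ▸ AddSubgroup.mem_top s.y)
  obtain ⟨m, hm⟩ := AddSubgroup.mem_zmultiples_iff.1 (hw ▸ AddSubgroup.mem_top (s.z - s.x • s.y))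
  have hs : s = k • ⟨u, 0, 0⟩ + l • ⟨0, v, 0⟩ + m • ⟨0, 0, w⟩ := by
    simpa only [zsmul_eq, smul_zero, hk, hl, hm] using s.eq_add_add
  rw [hs]
  refine add_mem (add_mem ?_ ?_) ?_ <;>
    exact AddSubgroup.zsmul_mem _ (AddSubgroup.subset_closure (by simp)) _

lemma isUnit_iff_isUnit_x {s : HeisenbergNearring A M} : IsUnit s ↔ IsUnit s.x := by
  constructor
  · exact fun h ↦ h.map
      ({ toFun := x, map_one' := one_x, map_mul' := mul_x } : HeisenbergNearring A M →* A)
  · intro h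
    obtain ⟨v, hv⟩ := h.exists_right_inv
    refine isUnit_iff_exists.2 ⟨⟨v, -(v ^ 2 • s.y), -(v ^ 3 • s.z)⟩, ?_, ?_⟩
    · ext
      · exact hv
      · simp only [mul_y, one_y]
        linear_combination (norm := module) -v • hv • s.y
      · simp only [mul_z, one_z]
        linear_combination (norm := module) -(v * (s.x * v + 1)) • hv • s.z
    · ext
      · exact (mul_comm ..).trans hv
      · simp only [mul_y, one_y]
        linear_combination (norm := module) -v • hv • s.y
      · simp only [mul_z, one_z]
        linear_combination (norm := module) -(v ^ 2) • hv • s.z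

variable (A M) in
/-- The additive subgroup of non-units of the Heisenberg nearring of a module over a local ring,
witnessing that this nearring is local. -/
def nonunitsAddSubgroup [IsLocalRing A] : AddSubgroup (HeisenbergNearring A M) where
  carrier := nonunits _
  zero_mem' := by simp [isUnit_iff_isUnit_x]
  add_mem' hs ht := by
    rw [mem_nonunits_iff, isUnit_iff_isUnit_x] at hs ht ⊢
    exact IsLocalRing.nonunits_add hs ht
  neg_mem' hs := by simpa [isUnit_iff_isUnit_x] using hs

end HeisenbergNearring

open HeisenbergNearring

/-- For each odd prime `p` there exists a local nearring of order `p⁴` whose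
additive group is the Miller–Moreno group `G₁ = (C_{p²} × C_p) ⋊ C_p`. -/
theorem exists_local_nearring_G1 (p : ℕ) (hp : p.Prime) (hodd : Odd p) :
    ∃ (R : Type) (_ : NearringWithOne R) (_ : Fintype R) (L : AddSubgroup R),
      (∀ x : R, x ∈ L ↔ ¬ IsUnit x) ∧
      Fintype.card R = p ^ 4 ∧
      ∃ a b c : R,
        c = -a - b + a + b ∧
        AddSubgroup.closure {a, b, c} = ⊤ ∧
        (p ^ 2) • a = 0 ∧ p • a ≠ 0 ∧ p • b = 0 ∧ p • c = 0 ∧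
        a + c = c + a ∧ b + c = c + b ∧ c ≠ 0 := by
  have : Fact p.Prime := ⟨hp⟩
  have : IsLocalRing (ZMod (p ^ 2)) := isLocalRing_zmod_pow p two_ne_zero
  let _ : Algebra (ZMod (p ^ 2)) (ZMod p) := ZMod.algebra' _ p (dvd_pow_self p two_ne_zero)
  have isUnit_two : IsUnit (2 : ZMod p) :=
    (ZMod.isUnit_iff_coprime 2 p).2 hodd.coprime_two_left
  have p_ne_zero : (p : ZMod (p ^ 2)) ≠ 0 := (ZMod.natCast_eq_zero_iff _ _).not.2 <|
    Nat.not_dvd_of_pos_of_lt hp.pos (lt_self_pow₀ hp.one_lt one_lt_two)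
  refine ⟨HeisenbergNearring (ZMod (p ^ 2)) (ZMod p), inferInstance, inferInstance,
    nonunitsAddSubgroup _ _, fun _ ↦ Iff.rfl, ?_, ⟨1, 0, 0⟩, ⟨0, 1, 0⟩, ⟨0, 0, 2⟩, ?_,
    ?_, ?_, ?_, ?_, ?_, (addCommute_mk_zero_zero _ _).eq, (addCommute_mk_zero_zero _ _).eq, ?_⟩
  · rw [card_eq, ZMod.card, ZMod.card]
    ring
  · simp [neg_sub_add_add]
  · exact closure_triple_eq_top (zmod_zmultiples_eq_top_of_isUnit isUnit_one)
      (zmod_zmultiples_eq_top_of_isUnit isUnit_one) (zmod_zmultiples_eq_top_of_isUnit isUnit_two)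
  · ext <;> simp [nsmul_eq]
  · exact fun h ↦ p_ne_zero (by simpa [nsmul_eq] using congrArg x h)
  · ext <;> simp [nsmul_eq]
  · ext <;> simp [nsmul_eq]
  · exact fun h ↦ isUnit_two.ne_zero (congrArg z h)
end

section
/- For each odd prime p there exists a local nearring R of order p⁴ together with elements a, b of R which generate the additive group R⁺ and satisfy p³•a = 0, p²•a ≠ 0, p•b = 0 and −b + a + b = (1 − p²)•a. (These conditions say exactly that R⁺ is isomorphic to the metacyclic group G₃ = C_{p³} ⋊ C_p of order p⁴ and nilpotency class 2.) -/
/-!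
Let `π : A → B` be a homomorphism of commutative rings and `ι : B → A` an `A`-linear map with
`π ∘ ι = 0`. The bilinear cocycle `ι (x₂ π(y₁))` turns `A × B` into a group of class at most two.
The naive product `(x₁ y₁, x₂ π(y₁) + y₂)` fails to distribute over this addition by the symmetric
bilinear term `x₁ ι (x₂ π(y₁ z₁))`; adding `x₁ ι (x₂ γ(y₁))` to the first coordinate repairs this
when `γ : A → B` vanishes on `ι(B)` and has polarisation `π(y) π(z)`, as the binomial coefficient
`y (y - 1) / 2` does. The rule `γ(y z) = γ(y) π(z) + π(y)² γ(z)`, also satisfied by the binomial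
coefficient, makes the product associative. Since the ideal `ι(B)` has square zero, units are
detected on the first coordinate, so a local ring `A` gives a local nearring.

The reduction `ℤ/de → ℤ/d` and multiplication by `e` from `ℤ/d` to `ℤ/de` produce the group
`C_{de} ⋊ C_d`. Integer binomial coefficients define `γ` without inverting `2`, provided that `d`
divides both `e` and `e (e - 1) / 2`; this is the case for `d = p` and `e = p²`.
-/

/-- The data for the twisted nearring on `A × B`: a ring homomorphism `proj : A → B`, an `A`-linear
map `incl : B → A` into its kernel, and a map `binom : A → B` which vanishes on the image of `incl`
and obeys the addition and multiplication formulas of the binomial coefficient `a ↦ a (a - 1) / 2`.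
Linearity over `A` is expressed through `proj` to avoid choosing an algebra structure on `B`. -/
structure BinomialTwist (A B : Type*) [CommRing A] [CommRing B] where
  proj : A →+* B
  incl : B →+ A
  binom : A → B
  incl_proj_mul : ∀ a b, incl (proj a * b) = a * incl b
  proj_incl : ∀ b, proj (incl b) = 0
  binom_add : ∀ a a', binom (a + a') = binom a + binom a' + proj a * proj a'
  binom_mul : ∀ a a', binom (a * a') = binom a * proj a' + proj a ^ 2 * binom a'
  binom_incl : ∀ b, binom (incl b) = 0

namespace BinomialTwist

attribute [simp] proj_incl binom_incl

/-- The underlying set `A × B` of the nearring attached to a twist `T`. It is a new type depending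
on `T`, so that the twisted operations do not clash with those of `A × B`. -/
@[ext]
structure Carrier {A B : Type*} [CommRing A] [CommRing B] (T : BinomialTwist A B) where
  fst : A
  snd : B

section Ring

variable {A B : Type*} [CommRing A] [CommRing B] (T : BinomialTwist A B)

@[simp]
lemma binom_one : T.binom 1 = 0 := by
  simpa using T.binom_mul 1 1

@[simp]
lemma binom_add_incl (a : A) (b : B) : T.binom (a + T.incl b) = T.binom a := by
  simp [T.binom_add]

lemma incl_mul_incl (b b' : B) : T.incl b * T.incl b' = 0 := by
  simp [← T.incl_proj_mul]

lemma isNilpotent_incl (b : B) : IsNilpotent (T.incl b) :=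
  ⟨2, by rw [sq, incl_mul_incl]⟩

lemma isUnit_add_incl {a : A} (ha : IsUnit a) (b : B) : IsUnit (a + T.incl b) :=
  (T.isNilpotent_incl b).isUnit_add_left_of_commute ha (Commute.all _ _)

lemma incl_mem_maximalIdeal [IsLocalRing A] (b : B) :
    T.incl b ∈ IsLocalRing.maximalIdeal A :=
  nilradical_le_prime _ (mem_nilradical.2 (T.isNilpotent_incl b))

end Ring

namespace Carrier

variable {A B : Type*} [CommRing A] [CommRing B] {T : BinomialTwist A B}

section Operations

instance : Add T.Carrier where
  add x y := ⟨x.fst + y.fst + T.incl (x.snd * T.proj y.fst), x.snd + y.snd⟩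

instance : Zero T.Carrier where
  zero := ⟨0, 0⟩

instance : Neg T.Carrier where
  neg x := ⟨-x.fst + T.incl (x.snd * T.proj x.fst), -x.snd⟩

instance : Mul T.Carrier where
  mul x y := ⟨x.fst * (y.fst + T.incl (x.snd * T.binom y.fst)), x.snd * T.proj y.fst + y.snd⟩

instance : One T.Carrier where
  one := ⟨1, 0⟩

variable (x y : T.Carrier)

@[simp]
lemma fst_add : (x + y).fst = x.fst + y.fst + T.incl (x.snd * T.proj y.fst) := rfl

@[simp]
lemma snd_add : (x + y).snd = x.snd + y.snd := rfl

@[simp]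
lemma fst_zero : (0 : T.Carrier).fst = 0 := rfl

@[simp]
lemma snd_zero : (0 : T.Carrier).snd = 0 := rfl

@[simp]
lemma fst_neg : (-x).fst = -x.fst + T.incl (x.snd * T.proj x.fst) := rfl

@[simp]
lemma snd_neg : (-x).snd = -x.snd := rfl

@[simp]
lemma fst_mul : (x * y).fst = x.fst * (y.fst + T.incl (x.snd * T.binom y.fst)) := rfl

@[simp]
lemma snd_mul : (x * y).snd = x.snd * T.proj y.fst + y.snd := rfl

@[simp]
lemma fst_one : (1 : T.Carrier).fst = 1 := rfl

@[simp]
lemma snd_one : (1 : T.Carrier).snd = 0 := rfl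

end Operations

instance : AddGroup T.Carrier :=
  AddGroup.ofLeftAxioms
    (fun x y z => by
      ext
      · simp only [fst_add, snd_add, map_add, proj_incl, add_mul, mul_add, mul_zero, map_zero]
        ring
      · exact add_assoc ..)
    (fun x => by ext <;> simp)
    (fun x => by ext <;> simp)

instance : Monoid T.Carrier where
  mul_assoc x y z := by
    have incl_binom_mul : T.incl (x.snd * T.binom (y.fst * z.fst)) =
        z.fst * T.incl (x.snd * T.binom y.fst) +
          y.fst * T.incl (x.snd * T.proj y.fst * T.binom z.fst) := by
      rw [← T.incl_proj_mul, ← T.incl_proj_mul, ← map_add, T.binom_mul]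
      congr 1
      ring
    ext
    · have binom_fst_mul : T.binom (y * z).fst = T.binom (y.fst * z.fst) := by
        simp only [fst_mul, T.binom_mul, binom_add_incl, map_add, proj_incl, add_zero]
      rw [fst_mul x, binom_fst_mul, incl_binom_mul]
      simp only [fst_mul, snd_mul, add_mul, map_add]
      linear_combination x.fst * (T.incl_mul_incl (x.snd * T.binom y.fst)
          (x.snd * T.proj y.fst * T.binom z.fst) +
        T.incl_mul_incl (x.snd * T.binom y.fst) (y.snd * T.binom z.fst))
    · simp only [fst_mul, snd_mul, map_mul, map_add, proj_incl]
      ring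
  one_mul x := by ext <;> simp
  mul_one x := by ext <;> simp

instance : NearringWithOne T.Carrier where
  left_distrib x y z := by
    ext
    · have incl_snd_mul : T.incl ((x * y).snd * T.proj (x * z).fst) =
          x.fst * T.incl (x.snd * (T.proj y.fst * T.proj z.fst) + y.snd * T.proj z.fst) := by
        rw [← T.incl_proj_mul]
        congr 1
        simp only [fst_mul, snd_mul, map_mul, map_add, proj_incl]
        ring
      rw [fst_add, incl_snd_mul]
      simp only [fst_mul, fst_add, binom_add_incl]
      simp only [T.binom_add, mul_add, map_add]
      ring
    · simp only [fst_add, snd_add, snd_mul, map_add, proj_incl]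
      ring

lemma exists_mul_eq_one {x : T.Carrier} (hx : IsUnit x.fst) :
    ∃ y : T.Carrier, IsUnit y.fst ∧ x * y = 1 := by
  obtain ⟨u, hu⟩ := hx
  set v : A := ↑u⁻¹
  have huv : x.fst * v = 1 := by rw [← hu, u.mul_inv]
  refine ⟨⟨v + T.incl (-(x.snd * T.binom v)), -(x.snd * T.proj v)⟩,
    T.isUnit_add_incl u⁻¹.isUnit _, ?_⟩
  ext
  · rw [fst_mul, binom_add_incl, add_assoc, ← map_add, neg_add_cancel, map_zero, add_zero, huv,
      fst_one]
  · simp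

lemma isUnit_iff {x : T.Carrier} : IsUnit x ↔ IsUnit x.fst := by
  constructor
  · rintro ⟨u, rfl⟩
    exact .of_mul_eq_one _ (congrArg fst u.mul_inv)
  · intro hx
    obtain ⟨y, hy, hxy⟩ := exists_mul_eq_one hx
    obtain ⟨z, -, hyz⟩ := exists_mul_eq_one hy
    have hzx : x = z := left_inv_eq_right_inv hxy hyz
    exact ⟨⟨x, y, hxy, hzx ▸ hyz⟩, rfl⟩

variable (T) in
/-- The non-units of the nearring over a local ring `A`, described as the preimage of the maximal
ideal of `A` under the first coordinate. -/
def nonunitsSubgroup [IsLocalRing A] : AddSubgroup T.Carrier where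
  carrier := {x | x.fst ∈ IsLocalRing.maximalIdeal A}
  zero_mem' := zero_mem (IsLocalRing.maximalIdeal A)
  add_mem' hx hy := add_mem (add_mem hx hy) (T.incl_mem_maximalIdeal _)
  neg_mem' hx := add_mem (neg_mem hx) (T.incl_mem_maximalIdeal _)

lemma mem_nonunitsSubgroup_iff [IsLocalRing A] {x : T.Carrier} :
    x ∈ nonunitsSubgroup T ↔ ¬ IsUnit x :=
  (IsLocalRing.mem_maximalIdeal x.fst).trans isUnit_iff.not.symm

section Generators

variable (T)

/-- The embedding of `A` as the normal subgroup of pairs with second coordinate `0`. -/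
def inl : A →+ T.Carrier where
  toFun a := ⟨a, 0⟩
  map_zero' := rfl
  map_add' a a' := by ext <;> simp

/-- The embedding of `B` as the complement of the range of `inl`, given by the pairs with first
coordinate `0`. -/
def inr : B →+ T.Carrier where
  toFun b := ⟨0, b⟩
  map_zero' := rfl
  map_add' b b' := by ext <;> simp

@[simp]
lemma fst_inl (a : A) : (inl T a).fst = a := rfl

@[simp]
lemma snd_inl (a : A) : (inl T a).snd = 0 := rfl

@[simp]
lemma fst_inr (b : B) : (inr T b).fst = 0 := rfl

@[simp]
lemma snd_inr (b : B) : (inr T b).snd = b := rfl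

lemma inl_injective : Function.Injective (inl T) :=
  fun _ _ h => congrArg fst h

lemma inl_fst_add_inr_snd (x : T.Carrier) : inl T x.fst + inr T x.snd = x := by
  ext <;> simp

lemma neg_inr_add_inl_add_inr (a : A) (b : B) :
    -inr T b + inl T a + inr T b = inl T (a - T.incl (b * T.proj a)) := by
  have hcomm : inl T a + inr T b = inr T b + inl T (a - T.incl (b * T.proj a)) := by
    ext
    · simp only [fst_add, fst_inl, snd_inl, fst_inr, snd_inr]
      simp only [map_sub, proj_incl, map_zero, mul_zero, sub_zero]
      ring
    · rw [snd_add, snd_add, snd_inl, snd_inl, zero_add, add_zero]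
  rw [add_assoc, hcomm, neg_add_cancel_left]

lemma closure_inl_inr_eq_top {a : A} {b : B} (ha : AddSubgroup.zmultiples a = ⊤)
    (hb : AddSubgroup.zmultiples b = ⊤) : AddSubgroup.closure {inl T a, inr T b} = ⊤ := by
  have inl_mem (a' : A) : inl T a' ∈ AddSubgroup.closure {inl T a, inr T b} := by
    obtain ⟨n, rfl⟩ := AddSubgroup.mem_zmultiples_iff.1 (ha ▸ AddSubgroup.mem_top a')
    rw [map_zsmul]
    exact zsmul_mem (AddSubgroup.subset_closure (by simp)) n
  have inr_mem (b' : B) : inr T b' ∈ AddSubgroup.closure {inl T a, inr T b} := by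
    obtain ⟨n, rfl⟩ := AddSubgroup.mem_zmultiples_iff.1 (hb ▸ AddSubgroup.mem_top b')
    rw [map_zsmul]
    exact zsmul_mem (AddSubgroup.subset_closure (by simp)) n
  refine eq_top_iff.2 fun x _ => ?_
  rw [← inl_fst_add_inr_snd T x]
  exact add_mem (inl_mem _) (inr_mem _)

end Generators

section Finite

variable (T)

/-- The coordinates as a bijection of sets, used for counting; it is not additive. -/
def equivProd : T.Carrier ≃ A × B where
  toFun x := (x.fst, x.snd)
  invFun x := ⟨x.1, x.2⟩

instance [Fintype A] [Fintype B] : Fintype T.Carrier :=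
  Fintype.ofEquiv _ (equivProd T).symm

lemma card_eq [Fintype A] [Fintype B] :
    Fintype.card T.Carrier = Fintype.card A * Fintype.card B :=
  (Fintype.card_congr (equivProd T)).trans (Fintype.card_prod A B)

end Finite

end Carrier

end BinomialTwist

section ZMod

lemma add_choose_two (m n : ℕ) : (m + n).choose 2 = m.choose 2 + n.choose 2 + m * n := by
  qify
  simp only [Nat.cast_choose_two]
  push_cast
  ring

lemma mul_choose_two (m n : ℕ) : (m * n).choose 2 = m.choose 2 * n + m ^ 2 * n.choose 2 := by
  qify
  simp only [Nat.cast_choose_two]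
  push_cast
  ring

/-- The binomial coefficient `x (x - 1) / 2` modulo `d` of a residue class modulo `n`, computed on
the least representative. It is well behaved only when both `n` and `n.choose 2` are divisible by
`d`; see `zmodChooseTwo_natCast`. -/
def zmodChooseTwo (n d : ℕ) (x : ZMod n) : ZMod d :=
  (x.val.choose 2 : ℕ)

lemma zmodChooseTwo_natCast {n d : ℕ} (hn : d ∣ n) (hchoose : d ∣ n.choose 2) (m : ℕ) :
    zmodChooseTwo n d m = (m.choose 2 : ℕ) := by
  have periodic : Function.Periodic (fun m : ℕ => ((m.choose 2 : ℕ) : ZMod d)) n := fun m => by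
    simp [add_choose_two, (ZMod.natCast_eq_zero_iff _ _).2 hn,
      (ZMod.natCast_eq_zero_iff _ _).2 hchoose]
  rw [zmodChooseTwo, ZMod.val_natCast]
  exact periodic.map_mod_nat m

lemma dvd_mul_choose_two {d e : ℕ} (h : d ∣ e) : d ∣ (d * e).choose 2 := by
  rw [mul_choose_two]
  exact dvd_add (h.mul_left _) ((dvd_pow_self d two_ne_zero).mul_right _)

/-- Multiplication by `e` as a homomorphism `ℤ/d → ℤ/de`. -/
def zmodMulRight (d e : ℕ) : ZMod d →+ ZMod (d * e) :=
  ZMod.lift d ⟨(AddMonoidHom.mulLeft (e : ZMod (d * e))).comp (Int.castAddHom _), by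
    simp [← Nat.cast_mul, mul_comm e d]⟩

lemma zmodMulRight_natCast (d e m : ℕ) : zmodMulRight d e m = e * m := by
  rw [← Int.cast_natCast, zmodMulRight, ZMod.lift_coe]
  simp

lemma zmodMulRight_one (d e : ℕ) : zmodMulRight d e 1 = e := by
  simpa using zmodMulRight_natCast d e 1

lemma zmod_zmultiples_one (n : ℕ) : AddSubgroup.zmultiples (1 : ZMod n) = ⊤ := by
  refine eq_top_iff.2 fun x _ => ?_
  obtain ⟨m, rfl⟩ := ZMod.intCast_surjective x
  exact AddSubgroup.intCast_mem_zmultiples_one m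

lemma isLocalRing_zmod_of_isPrimePow {n : ℕ} (hn : IsPrimePow n) : IsLocalRing (ZMod n) := by
  obtain ⟨p, k, hp, hk, rfl⟩ := hn
  have : Fact p.Prime := ⟨hp.nat_prime⟩
  have : Fact (1 < p ^ k) := ⟨Nat.one_lt_pow hk.ne' hp.nat_prime.one_lt⟩
  exact .of_surjective' (PadicInt.toZModPow k) (ZMod.ringHom_surjective _)

/-- The twist on `ℤ/de` and `ℤ/d` whose nearring has additive group `C_{de} ⋊ C_d`. -/
def zmodTwist (d e : ℕ) [NeZero d] [NeZero e] (h : d ∣ e) (hchoose : d ∣ e.choose 2) :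
    BinomialTwist (ZMod (d * e)) (ZMod d) where
  proj := ZMod.castHom (dvd_mul_right d e) (ZMod d)
  incl := zmodMulRight d e
  binom := zmodChooseTwo (d * e) d
  incl_proj_mul a b := by
    obtain ⟨m, rfl⟩ := ZMod.natCast_zmod_surjective a
    obtain ⟨n, rfl⟩ := ZMod.natCast_zmod_surjective b
    rw [map_natCast, ← Nat.cast_mul, zmodMulRight_natCast, zmodMulRight_natCast]
    push_cast
    ring
  proj_incl b := by
    obtain ⟨n, rfl⟩ := ZMod.natCast_zmod_surjective b
    rw [zmodMulRight_natCast, map_mul, map_natCast, (ZMod.natCast_eq_zero_iff e d).2 h, zero_mul]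
  binom_add a a' := by
    obtain ⟨m, rfl⟩ := ZMod.natCast_zmod_surjective a
    obtain ⟨n, rfl⟩ := ZMod.natCast_zmod_surjective a'
    simp only [← Nat.cast_add, map_natCast, add_choose_two,
      zmodChooseTwo_natCast (dvd_mul_right d e) (dvd_mul_choose_two h)]
    push_cast
    ring
  binom_mul a a' := by
    obtain ⟨m, rfl⟩ := ZMod.natCast_zmod_surjective a
    obtain ⟨n, rfl⟩ := ZMod.natCast_zmod_surjective a'
    simp only [← Nat.cast_mul, map_natCast, mul_choose_two,
      zmodChooseTwo_natCast (dvd_mul_right d e) (dvd_mul_choose_two h)]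
    push_cast
    ring
  binom_incl b := by
    obtain ⟨n, rfl⟩ := ZMod.natCast_zmod_surjective b
    rw [zmodMulRight_natCast, ← Nat.cast_mul,
      zmodChooseTwo_natCast (dvd_mul_right d e) (dvd_mul_choose_two h),
      ZMod.natCast_eq_zero_iff, mul_choose_two]
    exact dvd_add (hchoose.mul_right n) ((dvd_pow h two_ne_zero).mul_right _)

end ZMod

open BinomialTwist.Carrier in
theorem exists_local_nearring_G3_general (d e : ℕ) (hd : d ≠ 1) (hde : IsPrimePow (d * e))
    (h : d ∣ e) (hchoose : d ∣ e.choose 2) :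
    ∃ (R : Type) (_ : NearringWithOne R) (_ : Fintype R) (L : AddSubgroup R),
      (∀ x : R, x ∈ L ↔ ¬ IsUnit x) ∧
      Fintype.card R = d * e * d ∧
      ∃ a b : R,
        AddSubgroup.closure {a, b} = ⊤ ∧
        (d * e) • a = 0 ∧ e • a ≠ 0 ∧ d • b = 0 ∧
        -b + a + b = ((1 : ℤ) - e) • a := by
  have : NeZero d := ⟨left_ne_zero_of_mul hde.ne_zero⟩
  have : NeZero e := ⟨right_ne_zero_of_mul hde.ne_zero⟩
  have : IsLocalRing (ZMod (d * e)) := isLocalRing_zmod_of_isPrimePow hde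
  let T := zmodTwist d e h hchoose
  refine ⟨T.Carrier, inferInstance, inferInstance, nonunitsSubgroup T,
    fun _ => mem_nonunitsSubgroup_iff, ?_, inl T 1, inr T 1,
    closure_inl_inr_eq_top T (zmod_zmultiples_one _) (zmod_zmultiples_one _), ?_, ?_, ?_, ?_⟩
  · rw [card_eq, ZMod.card, ZMod.card]
  · rw [← map_nsmul, nsmul_one, ZMod.natCast_self, map_zero]
  · rw [← map_nsmul, nsmul_one, map_ne_zero_iff _ (inl_injective T), Ne, ZMod.natCast_eq_zero_iff]
    intro hdvd
    exact hd (Nat.dvd_one.1 (Nat.dvd_of_mul_dvd_mul_right (NeZero.pos e) (by rwa [one_mul])))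
  · rw [← map_nsmul, nsmul_one, ZMod.natCast_self, map_zero]
  · have incl_one : T.incl 1 = e := zmodMulRight_one d e
    rw [neg_inr_add_inl_add_inr, map_one, mul_one, incl_one, ← map_zsmul, zsmul_one]
    simp

/-- For each odd prime `p` there exists a local nearring of order `p⁴` whose
additive group is the metacyclic group `G₃ = C_{p³} ⋊ C_p`. -/
theorem exists_local_nearring_G3 (p : ℕ) (hp : p.Prime) (hodd : Odd p) :
    ∃ (R : Type) (_ : NearringWithOne R) (_ : Fintype R) (L : AddSubgroup R),
      (∀ x : R, x ∈ L ↔ ¬ IsUnit x) ∧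
      Fintype.card R = p ^ 4 ∧
      ∃ a b : R,
        AddSubgroup.closure {a, b} = ⊤ ∧
        (p ^ 3) • a = 0 ∧ (p ^ 2) • a ≠ 0 ∧ p • b = 0 ∧
        -b + a + b = ((1 : ℤ) - p ^ 2) • a := by
  simpa [← pow_succ', ← pow_succ] using exists_local_nearring_G3_general p (p ^ 2) hp.ne_one
    (by simpa only [← pow_succ'] using hp.isPrimePow.pow three_ne_zero) (dvd_pow_self p two_ne_zero)
    (hp.dvd_choose_pow two_ne_zero fun h => Nat.Prime.not_prime_pow le_rfl (h ▸ Nat.prime_two))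
end
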